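/- Let P ∈ M_m(ℂ) be an m × m complex projection matrix (P = P* = P²) whose diagonal entries are each at most ε. Let r ∈ ℕ and suppose t_1, ..., t_r > 0 satisfy Σ_{j=1}^r t_j = 1. Then there exist r diagonal projections Q_1, ..., Q_r in M_m(ℂ) such that Σ_{j=1}^r Q_j = I and ‖P Q_j P‖ ≤ t_j (1 + √(rε))² for 1 ≤ j ≤ r. -/

import Mathlib

open Matrix

/-- The diagonal projection matrix whose `i`-th diagonal entry is `1` exactly when `i ∈ S`. -/
def diagProj {m : ℕ} (S : Finset (Fin m)) : Matrix (Fin m) (Fin m) ℂ :=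
  Matrix.diagonal fun i => if i ∈ S then 1 else 0

/-- The operator norm of a matrix, acting on Euclidean space. -/
noncomputable def opNorm {m : ℕ} (A : Matrix (Fin m) (Fin m) ℂ) : ℝ :=
  ‖Matrix.toEuclideanCLM (𝕜 := ℂ) A‖

/-!
Put `q(w) = det (1 - P + diag(w) P)`, a real stable polynomial which is affine in each variable, and
let `p(z) = ∏ⱼ q(z(·, j))` in variables `z(i, j)`, where `j` runs over the `r` colours; `p` is the
polynomial `q` of the block diagonal projection `P ⊕ ⋯ ⊕ P`. Write `D_u` for the derivative in
direction `u` and `e(i, j)` for the standard basis vectors.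

By the barrier argument of Marcus, Spielman and Srivastava, `∏ᵢ (1 - D_{∑ⱼ e(i, j)}) p` is positive
above the constant point `(1 + √(rε))²`. Each factor is the average, with weights `tⱼ`, of the
operators `1 - D_{U(i, j)}` with `U(i, j) = tⱼ⁻¹ e(i, j)`. If the average of finitely many
`(1 - D_{U(j)}) g` is positive above a point, then `g` is too, because `e^{-s} g(z + s u)` decreases
to `0` along the averaged direction `u`, and then some single `(1 - D_{U(j)}) g` is positive above
that point. Applied to one row `i` at a time, this selects a colour `f i` for each `i`.

Since `p` is affine in each variable, `1 - D_v` is the shift `z ↦ z - v` for `v` along a coordinate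
axis. So, with `Sⱼ` the set of `i` coloured `j`, `q(x - tⱼ⁻¹ 1_{Sⱼ}) ≠ 0` for every
`x ≥ (1 + √(rε))²`, whereas every eigenvalue `l ≠ 0` of `P Qⱼ P` is a zero of
`q(l / tⱼ - tⱼ⁻¹ 1_{Sⱼ})`.
-/

open Polynomial hiding map_sub
open Filter Topology
open scoped Real

section AntiPick

/-- The rational function `b / a` maps the upper half-plane into the closed lower one, that is,
`-b / a` is a Pick function. Values at zeros of `a` are the junk value `0`. -/
def IsAntiPick (a b : ℝ[X]) : Prop :=
  ∀ s : ℂ, 0 < s.im → (aeval s b / aeval s a).im ≤ 0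

theorem im_div_pow_nonpos_of_tendsto {G : ℂ → ℂ} (hG : ContinuousAt G 0) {n : ℕ}
    (h : ∀ τ : ℂ, 0 < τ.im → (G τ / τ ^ n).im ≤ 0) {e : ℂ} (he : 0 < e.im) :
    (G 0 / e ^ n).im ≤ 0 := by
  have hlim : Tendsto (fun η : ℝ => (G (η * e) / e ^ n).im) (𝓝[>] 0) (𝓝 (G 0 / e ^ n).im) := by
    have hline : Tendsto (fun η : ℝ => (η : ℂ) * e) (𝓝[>] 0) (𝓝 0) := by
      have : Continuous fun η : ℝ => (η : ℂ) * e := by fun_prop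
      simpa using (this.tendsto 0).mono_left nhdsWithin_le_nhds
    exact (Complex.continuous_im.tendsto _).comp ((hG.tendsto.comp hline).div_const _)
  refine le_of_tendsto hlim (eventually_nhdsWithin_of_forall fun η (hη : 0 < η) => ?_)
  have hτ := h (η * e) (by rw [Complex.im_ofReal_mul]; positivity)
  rw [mul_pow, mul_comm (_ ^ n), div_mul_eq_div_div, ← Complex.ofReal_pow,
    Complex.div_ofReal_im] at hτ
  exact not_lt.1 fun hpos => hτ.not_gt (div_pos hpos (by positivity))

theorem exists_im_div_pow_pos {n : ℕ} (hn : 2 ≤ n) {c : ℝ} (hc : c ≠ 0) :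
    ∃ e : ℂ, 0 < e.im ∧ 0 < ((c : ℂ) / e ^ n).im := by
  have hn' : (2 : ℝ) ≤ n := by exact_mod_cast hn
  have hpow (θ : ℝ) : Complex.exp ((θ / n : ℝ) * Complex.I) ^ n = Complex.exp (θ * Complex.I) := by
    rw [← Complex.exp_nat_mul]
    have : (n : ℂ) ≠ 0 := by exact_mod_cast (by omega : n ≠ 0)
    congr 1
    push_cast
    field_simp
  have him (θ : ℝ) (h0 : 0 < θ) (hθ : θ < 2 * π) :
      0 < (Complex.exp ((θ / n : ℝ) * Complex.I)).im := by
    rw [Complex.exp_ofReal_mul_I_im]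
    apply Real.sin_pos_of_pos_of_lt_pi (by positivity)
    rw [div_lt_iff₀ (by positivity)]
    nlinarith [Real.pi_pos]
  have hpi := Real.pi_pos
  obtain hneg | hpos := hc.lt_or_gt
  · refine ⟨_, him (π / 2) (by linarith) (by linarith), ?_⟩
    rw [hpow]
    simp [Complex.exp_pi_div_two_mul_I, hneg]
  · refine ⟨_, him (π + π / 2) (by linarith) (by linarith), ?_⟩
    rw [hpow, Complex.ofReal_add, add_mul, Complex.exp_add, Complex.exp_pi_mul_I]
    simp [Complex.exp_pi_div_two_mul_I, div_neg, hpos]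

theorem pole_order_le_one {G : ℂ → ℂ} (hG : ContinuousAt G 0) {c : ℝ} (hc : G 0 = c) (hc0 : c ≠ 0)
    {n : ℕ} (h : ∀ τ : ℂ, 0 < τ.im → (G τ / τ ^ n).im ≤ 0) : n ≤ 1 := by
  by_contra! hn
  obtain ⟨e, he, hpos⟩ := exists_im_div_pow_pos hn hc0
  exact (hc ▸ im_div_pow_nonpos_of_tendsto hG h he).not_gt hpos

theorem residue_nonneg {G : ℂ → ℂ} (hG : ContinuousAt G 0) {c : ℝ} (hc : G 0 = c)
    (h : ∀ τ : ℂ, 0 < τ.im → (G τ / τ).im ≤ 0) : 0 ≤ c := by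
  have := im_div_pow_nonpos_of_tendsto (n := 1) hG (by simpa using h) (e := Complex.I) (by simp)
  simpa [hc] using this

theorem aeval_complex_ofReal (p : ℝ[X]) (x : ℝ) : aeval (x : ℂ) p = (p.eval x : ℝ) :=
  aeval_ofReal p x

theorem continuousAt_aeval_div {a b : ℝ[X]} {ρ : ℝ} (ha : a.eval ρ ≠ 0) :
    ContinuousAt (fun τ : ℂ => aeval ((ρ : ℂ) + τ) b / aeval ((ρ : ℂ) + τ) a) 0 := by
  refine ContinuousAt.div (by fun_prop) (by fun_prop) ?_
  simpa only [add_zero, aeval_complex_ofReal, ne_eq, Complex.ofReal_eq_zero] using ha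

theorem IsAntiPick.im_reverse_nonneg {a b : ℝ[X]} (h : IsAntiPick a b) {k : ℕ}
    (hdeg : b.natDegree = a.natDegree + k) {τ : ℂ} (hτ : 0 < τ.im) :
    0 ≤ (aeval τ b.reverse / aeval τ a.reverse / τ ^ k).im := by
  -- The reflection `τ ↦ (conj τ)⁻¹` preserves the upper half-plane and exchanges `0` and `∞`.
  set s : ℂ := (starRingEnd ℂ τ)⁻¹
  have hs : 0 < s.im := by
    have : 0 < Complex.normSq τ := Complex.normSq_pos.2 (by rintro rfl; simp at hτ)
    simpa [s, Complex.inv_im] using div_pos hτ this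
  have hs0 : s ≠ 0 := by rintro h0; simp [h0] at hs
  have hrev (p : ℝ[X]) : aeval s p = starRingEnd ℂ (aeval τ p.reverse) * s ^ p.natDegree := by
    let : Invertible s := invertibleOfNonzero hs0
    have hinv : ⅟s = starRingEnd ℂ τ := by simp [s]
    rw [← aeval_conj, ← hinv]
    exact (eval₂_reverse_mul_pow (algebraMap ℝ ℂ) s p).symm
  have heq : aeval s b / aeval s a =
      starRingEnd ℂ (aeval τ b.reverse / aeval τ a.reverse / τ ^ k) := by
    rw [hrev, hrev, hdeg, pow_add, mul_comm (s ^ _), ← mul_assoc,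
      mul_div_mul_right _ _ (pow_ne_zero _ hs0)]
    simp only [map_div₀, map_pow, s, inv_pow]
    ring
  have := h s hs
  rw [heq, Complex.conj_im] at this
  linarith

theorem natDegree_euclideanDiv {a : ℝ[X]} (ha : a ≠ 0) (b : ℝ[X]) :
    (b / a).natDegree = b.natDegree - a.natDegree := by
  rw [Polynomial.div_def, natDegree_C_mul (by simpa using ha),
    natDegree_divByMonic _ (monic_mul_leadingCoeff_inv ha), natDegree_mul_leadingCoeff_inv _ ha]

theorem IsAntiPick.div_eq_linear {a b : ℝ[X]} (h : IsAntiPick a b) (ha : a ≠ 0) :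
    ∃ k d : ℝ, 0 ≤ k ∧ b / a = C d - C k * X := by
  obtain rfl | hb := eq_or_ne b 0
  · exact ⟨0, 0, le_rfl, by simp⟩
  obtain hlt | hle := lt_or_ge b.natDegree a.natDegree
  · exact ⟨0, 0, le_rfl, by simp [(Polynomial.div_eq_zero_iff ha).2 (degree_lt_degree hlt)]⟩
  obtain ⟨n, hn⟩ := Nat.exists_eq_add_of_le hle
  let c : ℝ := b.leadingCoeff / a.leadingCoeff
  let G : ℂ → ℂ := fun τ =>
    aeval (((0 : ℝ) : ℂ) + τ) (-b.reverse) / aeval (((0 : ℝ) : ℂ) + τ) a.reverse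
  have hG : ContinuousAt G 0 := continuousAt_aeval_div <| by
    simpa [← coeff_zero_eq_eval_zero, coeff_zero_reverse] using ha
  have hG0 : G 0 = (-c : ℝ) := by
    have hrev (p : ℝ[X]) : p.reverse.eval 0 = p.leadingCoeff := by
      rw [← coeff_zero_eq_eval_zero, coeff_zero_reverse]
    simp only [G, c, add_zero, aeval_complex_ofReal, eval_neg, hrev, ← Complex.ofReal_div, neg_div]
  have hpole : ∀ τ : ℂ, 0 < τ.im → (G τ / τ ^ n).im ≤ 0 := fun τ hτ => by
    simpa [G, neg_div] using h.im_reverse_nonneg hn hτ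
  have hn1 : n ≤ 1 := pole_order_le_one hG hG0 (by simp [c, ha, hb]) hpole
  have hdiv : (b / a).natDegree = n := by rw [natDegree_euclideanDiv ha]; omega
  refine ⟨-(b / a).coeff 1, (b / a).coeff 0, ?_, ?_⟩
  · obtain rfl | rfl : n = 0 ∨ n = 1 := by omega
    · rw [coeff_eq_zero_of_natDegree_lt (by omega), neg_zero]
    · have hlead : (b / a).coeff 1 = c := by
        rw [← hdiv, coeff_natDegree, leadingCoeff_div (degree_lt_degree (by omega)).le]
      rw [hlead]
      exact residue_nonneg hG hG0 (by simpa using hpole)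
  · conv_lhs => rw [eq_X_add_C_of_natDegree_le_one (hdiv.trans_le hn1)]
    simp [add_comm]

theorem IsAntiPick.simple_root {a b : ℝ[X]} (h : IsAntiPick a b) (ha : a ≠ 0) {ρ : ℝ}
    (hρ : a.eval ρ = 0) (hb : b.eval ρ ≠ 0) :
    a.rootMultiplicity ρ = 1 ∧ 0 ≤ b.eval ρ / a.derivative.eval ρ := by
  obtain ⟨A, hA, hAdvd⟩ := exists_eq_pow_rootMultiplicity_mul_and_not_dvd a ha ρ
  have hA0 : A.eval ρ ≠ 0 := fun h0 => hAdvd (dvd_iff_isRoot.2 h0)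
  set n := a.rootMultiplicity ρ
  let G : ℂ → ℂ := fun τ => aeval ((ρ : ℂ) + τ) b / aeval ((ρ : ℂ) + τ) A
  have hG : ContinuousAt G 0 := continuousAt_aeval_div hA0
  have hG0 : G 0 = (b.eval ρ / A.eval ρ : ℝ) := by
    simp only [G, add_zero, aeval_complex_ofReal, Complex.ofReal_div]
  have hpole : ∀ τ : ℂ, 0 < τ.im → (G τ / τ ^ n).im ≤ 0 := fun τ hτ => by
    have hfactor : aeval ((ρ : ℂ) + τ) a = aeval ((ρ : ℂ) + τ) A * τ ^ n := by
      rw [hA]; simp [mul_comm]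
    simpa only [G, div_div, hfactor] using h (ρ + τ) (by simpa using hτ)
  have hn : n = 1 := le_antisymm (pole_order_le_one hG hG0 (div_ne_zero hb hA0) hpole)
    ((rootMultiplicity_pos ha).2 hρ)
  rw [hn, pow_one] at hA
  have hder : a.derivative.eval ρ = A.eval ρ := by rw [hA]; simp
  exact ⟨hn, hder ▸ residue_nonneg hG hG0 (by simpa [hn] using hpole)⟩

theorem eval_div_eq_sum_of_degree_lt {K : Type*} [Field K] [DecidableEq K] {a f : K[X]}
    (ha0 : a ≠ 0) (ha : a.Splits) (hnodup : a.roots.Nodup) (hf : f.degree < a.degree) {s : K}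
    (hs : a.eval s ≠ 0) :
    f.eval s / a.eval s =
      ∑ ρ ∈ a.roots.toFinset, f.eval ρ / a.derivative.eval ρ / (s - ρ) := by
  set S := a.roots.toFinset
  have hS {ρ : K} : ρ ∈ S ↔ a.eval ρ = 0 := by simp [S, ha0]
  have hnodal : a = C a.leadingCoeff * Lagrange.nodal S id := by
    conv_lhs => rw [ha.eq_prod_roots]
    simp [Lagrange.nodal, Finset.prod, S, hnodup.dedup]
  have hlead : a.leadingCoeff ≠ 0 := by simpa using ha0
  have hdeg : a.degree = S.card := by
    conv_lhs => rw [hnodal, degree_C_mul hlead, Lagrange.degree_nodal]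
  have hnode : ∀ ρ ∈ S, s ≠ id ρ := by
    rintro ρ hρ rfl
    exact hs (hS.1 hρ)
  have ha_eval : a.eval s = a.leadingCoeff * (Lagrange.nodal S id).eval s := by
    conv_lhs => rw [hnodal, eval_mul, eval_C]
  have ha_der (ρ : K) : a.derivative.eval ρ =
      a.leadingCoeff * (Lagrange.nodal S id).derivative.eval ρ := by
    conv_lhs => rw [hnodal, derivative_C_mul, eval_mul, eval_C]
  have hs' := right_ne_zero_of_mul (ha_eval ▸ hs)
  have hinterp := congrArg (eval s) (Lagrange.eq_interpolate (Set.injOn_id _) (hdeg ▸ hf))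
  rw [hinterp, Lagrange.eval_interpolate_not_at_node _ hnode, ha_eval, mul_comm a.leadingCoeff,
    mul_div_mul_left _ _ hs', Finset.sum_div]
  refine Finset.sum_congr rfl fun ρ hρ => ?_
  rw [Lagrange.nodalWeight_eq_eval_derivative_nodal hρ, ha_der]
  simp only [id, div_eq_mul_inv, mul_inv]
  ring

theorem IsAntiPick.partial_fractions_of_isCoprime {a b : ℝ[X]} (h : IsAntiPick a b) (ha0 : a ≠ 0)
    (ha : a.Splits) (hab : IsCoprime a b) :
    ∃ (c : ℝ → ℝ) (k d : ℝ), 0 ≤ k ∧ (∀ ρ ∈ a.roots.toFinset, 0 ≤ c ρ) ∧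
      ∀ s, a.eval s ≠ 0 →
        b.eval s / a.eval s = d - k * s + ∑ ρ ∈ a.roots.toFinset, c ρ / (s - ρ) := by
  have hroot {ρ : ℝ} (hρ : a.eval ρ = 0) := h.simple_root ha0 hρ fun hb => by
    obtain ⟨u, v, huv⟩ := hab
    simpa [hρ, hb] using congrArg (eval ρ) huv
  have hnodup : a.roots.Nodup := Multiset.nodup_iff_count_le_one.2 fun ρ => by
    rw [count_roots]
    by_cases hρ : a.eval ρ = 0
    · exact (hroot hρ).1.le
    · simp [rootMultiplicity_eq_zero hρ]
  obtain ⟨k, d, hk, hdiv⟩ := h.div_eq_linear ha0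
  have hdivmod (s : ℝ) : b.eval s = a.eval s * (d - k * s) + (b % a).eval s := by
    conv_lhs => rw [← EuclideanDomain.div_add_mod b a, hdiv]
    simp
  refine ⟨fun ρ => b.eval ρ / a.derivative.eval ρ, k, d, hk, fun ρ hρ => ?_, fun s hs => ?_⟩
  · exact (hroot (by simpa [ha0] using hρ)).2
  · rw [hdivmod, add_div, mul_div_cancel_left₀ _ hs,
      eval_div_eq_sum_of_degree_lt ha0 ha hnodup (degree_mod_lt b ha0) hs]
    congr 1
    refine Finset.sum_congr rfl fun ρ hρ => ?_
    have hρ : a.eval ρ = 0 := by simpa [ha0] using hρ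
    simp only [hdivmod ρ, hρ, zero_mul, zero_add]

theorem IsAntiPick.of_mul_left {g a b : ℝ[X]} (h : IsAntiPick (g * a) (g * b))
    (hg0 : g ≠ 0) (hg : g.Splits) : IsAntiPick a b := fun s hs => by
  have hgs : aeval s g ≠ 0 := fun h0 => by
    obtain ⟨x, rfl⟩ := hg.mem_range_of_isRoot hg0
      (show (g.map (algebraMap ℝ ℂ)).IsRoot s by rwa [IsRoot.def, eval_map_algebraMap])
    simp at hs
  simpa only [map_mul, mul_div_mul_left _ _ hgs] using h s hs

theorem IsAntiPick.partial_fractions {a b : ℝ[X]} (h : IsAntiPick a b) (ha0 : a ≠ 0)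
    (ha : a.Splits) :
    ∃ (S : Finset ℝ) (c : ℝ → ℝ) (k d : ℝ), 0 ≤ k ∧ (∀ ρ ∈ S, a.eval ρ = 0 ∧ 0 ≤ c ρ) ∧
      ∀ s, a.eval s ≠ 0 → b.eval s / a.eval s = d - k * s + ∑ ρ ∈ S, c ρ / (s - ρ) := by
  let g := EuclideanDomain.gcd a b
  have hg0 : g ≠ 0 := fun h0 => ha0 (EuclideanDomain.gcd_eq_zero_iff.1 h0).1
  obtain ⟨a', ha'⟩ : g ∣ a := EuclideanDomain.gcd_dvd_left a b
  obtain ⟨b', hb'⟩ : g ∣ b := EuclideanDomain.gcd_dvd_right a b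
  have hcop : IsCoprime a' b' := by
    refine ⟨EuclideanDomain.gcdA a b, EuclideanDomain.gcdB a b, mul_left_cancel₀ hg0 ?_⟩
    have hbezout : g = a * _ + b * _ := EuclideanDomain.gcd_eq_gcd_ab a b
    linear_combination -EuclideanDomain.gcdA a b * ha' - EuclideanDomain.gcdB a b * hb' - hbezout
  have ha0' : a' ≠ 0 := by rintro rfl; exact ha0 (by rw [ha', mul_zero])
  have h' : IsAntiPick a' b' :=
    IsAntiPick.of_mul_left (g := g) (ha' ▸ hb' ▸ h) hg0 (ha.of_dvd ha0 ⟨a', ha'⟩)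
  obtain ⟨c, k, d, hk, hc, hf⟩ := h'.partial_fractions_of_isCoprime ha0'
    (ha.of_dvd ha0 ⟨g, by rw [mul_comm]; exact ha'⟩) hcop
  refine ⟨a'.roots.toFinset, c, k, d, hk, fun ρ hρ => ⟨?_, hc ρ hρ⟩, fun s hs => ?_⟩
  · have : a'.eval ρ = 0 := by simpa [ha0'] using hρ
    rw [ha', eval_mul, this, mul_zero]
  · rw [ha', eval_mul] at hs
    rw [← hf s (right_ne_zero_of_mul hs), ha', hb', eval_mul, eval_mul,
      mul_div_mul_left _ _ (left_ne_zero_of_mul hs)]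

theorem antitoneOn_div_sub {c ρ : ℝ} (hc : 0 ≤ c) :
    AntitoneOn (fun s => c / (s - ρ)) (Set.Ioi ρ) := fun s (hs : ρ < s) _ _ hss' =>
  div_le_div_of_nonneg_left hc (sub_pos.2 hs) (sub_le_sub_right hss' ρ)

theorem convexOn_div_sub {c ρ : ℝ} (hc : 0 ≤ c) :
    ConvexOn ℝ (Set.Ioi ρ) (fun s => c / (s - ρ)) := by
  have hinv : ConvexOn ℝ (Set.Ioi ρ) (fun s => (s - ρ) ^ (-1 : ℤ)) := by
    simpa [sub_eq_add_neg, Function.comp_def] using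
      (convexOn_zpow (𝕜 := ℝ) (-1)).translate_left (-ρ)
  simpa [div_eq_mul_inv] using hinv.smul hc

theorem IsAntiPick.antitoneOn_and_convexOn {a b : ℝ[X]} (h : IsAntiPick a b) (ha : a.Splits)
    (hpos : ∀ s, 0 ≤ s → 0 < a.eval s) :
    AntitoneOn (fun s => b.eval s / a.eval s) (Set.Ici 0) ∧
      ConvexOn ℝ (Set.Ici 0) (fun s => b.eval s / a.eval s) := by
  have ha0 : a ≠ 0 := by rintro rfl; simpa using hpos 0 le_rfl
  obtain ⟨S, c, k, d, hk, hS, hf⟩ := h.partial_fractions ha0 ha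
  have hsub : ∀ ρ ∈ S, Set.Ici 0 ⊆ Set.Ioi ρ := fun ρ hρ =>
    Set.Ici_subset_Ioi.2 <| by
      by_contra! h0
      exact (hpos ρ h0).ne' (hS ρ hρ).1
  have hEq : Set.EqOn (fun s => (d - k * s) + ∑ ρ ∈ S, c ρ / (s - ρ))
      (fun s => b.eval s / a.eval s) (Set.Ici 0) := fun s hs => (hf s (hpos s hs).ne').symm
  constructor
  · refine AntitoneOn.congr (fun s hs s' hs' hss' => ?_) hEq
    have hsum : ∑ ρ ∈ S, c ρ / (s' - ρ) ≤ ∑ ρ ∈ S, c ρ / (s - ρ) := Finset.sum_le_sum fun ρ hρ =>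
      antitoneOn_div_sub (hS ρ hρ).2 (hsub ρ hρ hs) (hsub ρ hρ hs') hss'
    have := mul_le_mul_of_nonneg_left hss' hk
    linarith
  · refine ConvexOn.congr (ConvexOn.add ?_ ?_) hEq
    · refine ⟨convex_Ici 0, fun x _ y _ α β _ _ hαβ => le_of_eq ?_⟩
      simp only [smul_eq_mul]
      linear_combination -d * hαβ
    · refine ⟨convex_Ici 0, fun x hx y hy α β hα hβ hαβ => ?_⟩
      simp only [Finset.smul_sum, ← Finset.sum_add_distrib]
      exact Finset.sum_le_sum fun ρ hρ =>
        (convexOn_div_sub (hS ρ hρ).2).2 (hsub ρ hρ hx) (hsub ρ hρ hy) hα hβ hαβ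

end AntiPick

section DirectionalDerivative

variable {σ R : Type*} [CommRing R]

/-- The directional derivative `p ↦ ∑ i, u i * ∂p/∂X i`, linear in the direction `u`. It is the
derivation sending `X i` to the constant `u i`, which makes sense for infinitely many variables. -/
noncomputable def dirDeriv :
    (σ → R) →ₗ[R] Derivation R (MvPolynomial σ R) (MvPolynomial σ R) where
  toFun u := MvPolynomial.mkDerivation R fun i => MvPolynomial.C (u i)
  map_add' u v := MvPolynomial.derivation_ext fun i => by simp
  map_smul' c u := MvPolynomial.derivation_ext fun i => by simp [MvPolynomial.smul_eq_C_mul]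

@[simp]
theorem dirDeriv_X (u : σ → R) (i : σ) :
    dirDeriv u (MvPolynomial.X i) = MvPolynomial.C (u i) :=
  MvPolynomial.mkDerivation_X R _ i

theorem dirDeriv_comm (u v : σ → R) (p : MvPolynomial σ R) :
    dirDeriv u (dirDeriv v p) = dirDeriv v (dirDeriv u p) := by
  have hbracket : ⁅dirDeriv u, dirDeriv v⁆ = (0 : Derivation R (MvPolynomial σ R) _) :=
    MvPolynomial.derivation_ext fun i => by simp [Derivation.commutator_apply]
  simpa [Derivation.commutator_apply, sub_eq_zero] using congrArg (· p) hbracket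

theorem dirDeriv_sum {ι : Type*} (s : Finset ι) (U : ι → σ → R) (p : MvPolynomial σ R) :
    dirDeriv (∑ j ∈ s, U j) p = ∑ j ∈ s, dirDeriv (U j) p := by
  rw [map_sum, ← Derivation.coeFnAddMonoidHom_apply, map_sum, Finset.sum_apply]
  rfl

variable {A B : Type*} [CommRing A] [Algebra R A]

/-- The univariate polynomial `s ↦ p (w + s v)`: the restriction of `p` to the line through `w` in
direction `v`. The base point may have coordinates in a larger ring than `p` and `v`. -/
noncomputable def restrictLine (p : MvPolynomial σ R) (w : σ → A) (v : σ → R) : A[X] :=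
  MvPolynomial.aeval (fun i => C (w i) + C (algebraMap R A (v i)) * X) p

theorem aeval_restrictLine [CommRing B] [Algebra R B] [Algebra A B] [IsScalarTower R A B]
    (p : MvPolynomial σ R) (w : σ → A) (v : σ → R) (s : B) :
    aeval s (restrictLine p w v) =
      MvPolynomial.aeval (fun i => algebraMap A B (w i) + algebraMap R B (v i) * s) p := by
  have := MvPolynomial.comp_aeval_apply (R := R)
    (fun i => C (w i) + C (algebraMap R A (v i)) * X) ((aeval (R := A) s).restrictScalars R) p
  simpa [restrictLine, ← IsScalarTower.algebraMap_apply] using this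

theorem eval_restrictLine (p : MvPolynomial σ R) (w : σ → A) (v : σ → R) (s : A) :
    (restrictLine p w v).eval s =
      MvPolynomial.aeval (fun i => w i + algebraMap R A (v i) * s) p := by
  simpa using aeval_restrictLine p w v s

theorem eval_restrictLine_self (p : MvPolynomial σ R) (z v : σ → R) (s : R) :
    (restrictLine p z v).eval s = MvPolynomial.eval (z + s • v) p := by
  rw [eval_restrictLine, MvPolynomial.aeval_eq_eval]
  congr 2
  ext i
  simp [mul_comm]

theorem derivative_restrictLine (p : MvPolynomial σ R) (w : σ → A) (v : σ → R) :
    derivative (restrictLine p w v) = restrictLine (dirDeriv v p) w v := by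
  induction p using MvPolynomial.induction_on with
  | C a => simp [restrictLine, ← MvPolynomial.algebraMap_eq]
  | add p q hp hq => simpa only [restrictLine, map_add] using congrArg₂ (· + ·) hp hq
  | mul_X p i hp =>
    simp only [restrictLine] at hp
    simp only [restrictLine, map_mul, MvPolynomial.aeval_X, derivative_mul, hp, derivative_C,
      zero_mul, derivative_X, mul_one, zero_add, Derivation.leibniz, dirDeriv_X,
      smul_eq_mul, map_add, MvPolynomial.algHom_C, Polynomial.algebraMap_apply]
    ring

end DirectionalDerivative

section Stability

variable {σ : Type*} {g : MvPolynomial σ ℝ} {u v z y : σ → ℝ}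

/-- A real stable polynomial: one with no zeros in the product of open upper half-planes. -/
def IsStable (g : MvPolynomial σ ℝ) : Prop :=
  ∀ w : σ → ℂ, (∀ i, 0 < (w i).im) → MvPolynomial.aeval w g ≠ 0

/-- The point `z` lies above the roots of `g`: `g` is positive on the orthant `z + ℝ≥0^σ`. -/
def IsAboveRoots (g : MvPolynomial σ ℝ) (z : σ → ℝ) : Prop :=
  ∀ y, z ≤ y → 0 < MvPolynomial.eval y g

/-- The barrier function of Marcus, Spielman and Srivastava in direction `u`: the logarithmic
derivative of `g`. It is used only above the roots of `g`, where the denominator is positive. -/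
noncomputable def barrier (u : σ → ℝ) (g : MvPolynomial σ ℝ) (z : σ → ℝ) : ℝ :=
  MvPolynomial.eval z (dirDeriv u g) / MvPolynomial.eval z g

theorem barrier_sum {ι : Type*} (s : Finset ι) (U : ι → σ → ℝ) (g : MvPolynomial σ ℝ)
    (z : σ → ℝ) : barrier (∑ j ∈ s, U j) g z = ∑ j ∈ s, barrier (U j) g z := by
  rw [barrier, dirDeriv_sum, map_sum, Finset.sum_div]
  rfl

theorem derivative_div_eq_zero_or_im_neg {p : ℂ[X]} (hp : ∀ s : ℂ, 0 ≤ s.im → p.eval s ≠ 0) :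
    p.derivative.eval 0 / p.eval 0 = 0 ∨ (p.derivative.eval 0 / p.eval 0).im < 0 := by
  rw [(IsAlgClosed.splits p).eval_derivative_div_eval_of_ne_zero (hp 0 (by simp))]
  refine Multiset.sum_induction (fun F : ℂ => F = 0 ∨ F.im < 0) _ ?_ (Or.inl rfl) ?_
  · rintro F G (rfl | hF) (rfl | hG)
    · simp
    · simpa using Or.inr hG
    · simpa using Or.inr hF
    · exact Or.inr (add_neg hF hG)
  · intro F hF
    obtain ⟨ρ, hρ, rfl⟩ := Multiset.mem_map.1 hF
    have hρneg : ρ.im < 0 := not_le.1 fun h0 => hp ρ h0 (isRoot_of_mem_roots hρ)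
    have hnorm : 0 < Complex.normSq ρ := Complex.normSq_pos.2 (by rintro rfl; simp at hρneg)
    right
    simpa [Complex.inv_im] using div_pos (neg_pos.2 hρneg) hnorm

theorem IsStable.dirDeriv_div_eq_zero_or_im_neg (hg : IsStable g) (hu : 0 ≤ u) {w : σ → ℂ}
    (hw : ∀ i, 0 < (w i).im) :
    MvPolynomial.aeval w (dirDeriv u g) / MvPolynomial.aeval w g = 0 ∨
      (MvPolynomial.aeval w (dirDeriv u g) / MvPolynomial.aeval w g).im < 0 := by
  have hline : ∀ s : ℂ, 0 ≤ s.im → (restrictLine g w u).eval s ≠ 0 := fun s hs => by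
    rw [eval_restrictLine]
    refine hg _ fun i => ?_
    have := mul_nonneg (hu i) hs
    simpa using add_pos_of_pos_of_nonneg (hw i) this
  simpa [derivative_restrictLine, eval_restrictLine] using derivative_div_eq_zero_or_im_neg hline

theorem IsStable.sub_dirDeriv (hg : IsStable g) (hu : 0 ≤ u) : IsStable (g - dirDeriv u g) := by
  intro w hw h0
  rw [map_sub, sub_eq_zero] at h0
  have := hg.dirDeriv_div_eq_zero_or_im_neg hu hw
  rw [← h0, div_self (hg w hw)] at this
  simp at this

theorem IsStable.isAntiPick_restrictLine (hg : IsStable g) (hu : 0 ≤ u) (z : σ → ℝ)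
    (hv : ∀ i, 0 < v i) : IsAntiPick (restrictLine g z v) (restrictLine (dirDeriv u g) z v) :=
  fun s hs => by
    simp only [aeval_restrictLine]
    obtain h0 | hneg := hg.dirDeriv_div_eq_zero_or_im_neg hu
      (w := fun i => (z i : ℂ) + v i * s) fun i => by simpa using mul_pos (hv i) hs
    · exact (congrArg Complex.im h0).le
    · exact hneg.le

theorem IsStable.splits_restrictLine (hg : IsStable g) (z : σ → ℝ) (hv : ∀ i, 0 < v i) :
    (restrictLine g z v).Splits := by
  have hupper : ∀ s : ℂ, 0 < s.im → aeval s (restrictLine g z v) ≠ 0 := fun s hs => by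
    rw [aeval_restrictLine]
    exact hg _ fun i => by simpa using mul_pos (hv i) hs
  refine Splits.of_splits_map (algebraMap ℝ ℂ) (IsAlgClosed.splits _) fun s hs => ?_
  have hroot : aeval s (restrictLine g z v) = 0 := by
    simpa [eval_map_algebraMap] using isRoot_of_mem_roots hs
  have him : s.im ≤ 0 := not_lt.1 fun h => hupper s h hroot
  have him' : (starRingEnd ℂ s).im ≤ 0 := not_lt.1 fun h => hupper _ h <| by
    rw [aeval_conj, hroot, map_zero]
  rw [Complex.conj_im] at him'
  exact ⟨s.re, Complex.ext rfl (le_antisymm (neg_nonpos.1 him') him)⟩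

theorem nonneg_of_forall_pos_nonneg {F : (σ → ℝ) → ℝ} (hF : ContinuousAt F v) (hv : 0 ≤ v)
    (h : ∀ w : σ → ℝ, (∀ i, 0 < w i) → 0 ≤ F w) : 0 ≤ F v := by
  have hline : Tendsto (fun η : ℝ => v + η • (1 : σ → ℝ)) (𝓝[>] 0) (𝓝 v) := by
    have : Continuous fun η : ℝ => v + η • (1 : σ → ℝ) := by fun_prop
    simpa using (this.tendsto 0).mono_left nhdsWithin_le_nhds
  refine ge_of_tendsto (hF.tendsto.comp hline) (eventually_nhdsWithin_of_forall fun η hη => ?_)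
  exact h _ fun i => by simpa using add_pos_of_nonneg_of_pos (hv i) hη

theorem continuousAt_barrier (u : σ → ℝ) (hz : MvPolynomial.eval z g ≠ 0) :
    ContinuousAt (barrier u g) z :=
  (MvPolynomial.continuous_eval _).continuousAt.div (MvPolynomial.continuous_eval _).continuousAt hz

theorem IsStable.antitoneOn_and_convexOn_barrier_of_pos (hg : IsStable g) (hu : 0 ≤ u)
    (hv : ∀ i, 0 < v i) (hpos : ∀ s : ℝ, 0 ≤ s → 0 < MvPolynomial.eval (z + s • v) g) :
    AntitoneOn (fun s : ℝ => barrier u g (z + s • v)) (Set.Ici 0) ∧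
      ConvexOn ℝ (Set.Ici 0) (fun s : ℝ => barrier u g (z + s • v)) := by
  simpa only [barrier, eval_restrictLine_self] using
    (hg.isAntiPick_restrictLine hu z hv).antitoneOn_and_convexOn (hg.splits_restrictLine z hv)
      (by simpa only [eval_restrictLine_self] using hpos)

theorem IsAboveRoots.eval_pos (hz : IsAboveRoots g z) : 0 < MvPolynomial.eval z g :=
  hz z le_rfl

theorem IsAboveRoots.mono (hz : IsAboveRoots g z) (hzy : z ≤ y) : IsAboveRoots g y :=
  fun x hx => hz x (hzy.trans hx)

theorem IsAboveRoots.add_smul (hz : IsAboveRoots g z) (hv : 0 ≤ v) {s : ℝ} (hs : 0 ≤ s) :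
    IsAboveRoots g (z + s • v) :=
  hz.mono (le_add_of_nonneg_right (smul_nonneg hs hv))

theorem IsStable.barrier_anti (hg : IsStable g) (hu : 0 ≤ u) (hz : IsAboveRoots g z)
    (hzy : z ≤ y) : barrier u g y ≤ barrier u g z := by
  have hzy' : IsAboveRoots g (z + (y - z)) := by rw [add_sub_cancel]; exact hz.mono hzy
  have hF : ContinuousAt (fun v => barrier u g z - barrier u g (z + v)) (y - z) :=
    continuousAt_const.sub <|
      (continuousAt_barrier u hzy'.eval_pos.ne').comp (f := fun v => z + v) (by fun_prop)
  have := nonneg_of_forall_pos_nonneg hF (sub_nonneg.2 hzy) fun w hw => by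
    have hanti := (hg.antitoneOn_and_convexOn_barrier_of_pos hu hw fun s hs =>
      (hz.add_smul (fun i => (hw i).le) hs).eval_pos).1
    simpa using hanti Set.self_mem_Ici (Set.mem_Ici.2 zero_le_one) zero_le_one
  simpa using this

theorem IsStable.convexOn_barrier (hg : IsStable g) (hu : 0 ≤ u) (hz : IsAboveRoots g z)
    (hv : 0 ≤ v) : ConvexOn ℝ (Set.Ici 0) (fun s : ℝ => barrier u g (z + s • v)) := by
  refine ⟨convex_Ici 0, fun x hx y hy α β hα hβ hαβ => ?_⟩
  have hcont {s : ℝ} (hs : 0 ≤ s) : ContinuousAt (fun v => barrier u g (z + s • v)) v :=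
    (continuousAt_barrier u (hz.add_smul hv hs).eval_pos.ne').comp (f := fun v => z + s • v)
      (by fun_prop)
  have hxy : 0 ≤ α • x + β • y := convex_Ici 0 hx hy hα hβ hαβ
  refine sub_nonneg.1 <| nonneg_of_forall_pos_nonneg (((continuousAt_const.mul (hcont hx)).add
    (continuousAt_const.mul (hcont hy))).sub (hcont hxy)) hv fun w hw => sub_nonneg.2 ?_
  exact (hg.antitoneOn_and_convexOn_barrier_of_pos hu hw fun s hs =>
      (hz.add_smul (fun i => (hw i).le) hs).eval_pos).2.2 hx hy hα hβ hαβ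

theorem IsAboveRoots.sub_dirDeriv (hz : IsAboveRoots g z) (hg : IsStable g) (hu : 0 ≤ u)
    (h : barrier u g z < 1) : IsAboveRoots (g - dirDeriv u g) z := fun y hy => by
  have hy1 := (hg.barrier_anti hu hz hy).trans_lt h
  rw [barrier, div_lt_one (hz y hy)] at hy1
  simpa using hy1

theorem hasDerivAt_eval_add_smul (p : MvPolynomial σ ℝ) (z v : σ → ℝ) (s : ℝ) :
    HasDerivAt (fun s : ℝ => MvPolynomial.eval (z + s • v) p)
      (MvPolynomial.eval (z + s • v) (dirDeriv v p)) s := by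
  simpa only [eval_restrictLine_self, derivative_restrictLine] using
    (restrictLine p z v).hasDerivAt s

theorem hasDerivAt_barrier_add_smul (w : σ → ℝ) {s : ℝ} (hy : z + s • u = y)
    (hg : MvPolynomial.eval y g ≠ 0) (hg' : MvPolynomial.eval y (g - dirDeriv u g) ≠ 0) :
    HasDerivAt (fun s : ℝ => barrier w g (z + s • u))
      ((barrier w g y - barrier w (g - dirDeriv u g) y) * (1 - barrier u g y)) s := by
  subst hy
  rw [map_sub] at hg'
  refine ((hasDerivAt_eval_add_smul (dirDeriv w g) z u s).div
    (hasDerivAt_eval_add_smul g z u s) hg).congr_deriv ?_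
  rw [dirDeriv_comm u w]
  simp only [barrier, map_sub]
  field_simp
  ring

theorem IsStable.barrier_sub_dirDeriv_add_smul_le (hg : IsStable g) (hu : 0 ≤ u)
    (hz : IsAboveRoots g z) {δ : ℝ} (hδ : 0 < δ) (h : barrier u g z ≤ 1 - δ⁻¹) {w : σ → ℝ}
    (hw : 0 ≤ w) : barrier w (g - dirDeriv u g) (z + δ • u) ≤ barrier w g z := by
  set y := z + δ • u with hy
  have hzy : z ≤ y := le_add_of_nonneg_right (smul_nonneg hδ.le hu)
  have hlt : barrier u g z < 1 := by linarith [inv_pos.2 hδ]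
  have hconv := hg.convexOn_barrier hw hz hu
  have hderiv := hasDerivAt_barrier_add_smul w hy.symm (hz y hzy).ne'
    (hz.sub_dirDeriv hg hu hlt y hzy).ne'
  have hgap : δ⁻¹ ≤ 1 - barrier u g y := by linarith [hg.barrier_anti hu hz hzy]
  have hlower := hconv.slope_le_of_hasDerivAt Set.self_mem_Ici (Set.mem_Ici.2 hδ.le) hδ hderiv
  have hupper := hconv.le_slope_of_hasDerivAt (Set.mem_Ici.2 hδ.le)
    (Set.mem_Ici.2 (by linarith : 0 ≤ δ + 1)) (lt_add_one δ) hderiv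
  have hanti : barrier w g (z + (δ + 1) • u) ≤ barrier w g y :=
    hg.barrier_anti hw (hz.mono hzy) (by gcongr _ + ?_ • _; simp)
  simp only [slope_def_field, zero_smul, add_zero, sub_zero, add_sub_cancel_left, div_one,
    ← hy] at hlower hupper
  rw [div_eq_mul_inv] at hlower
  have hdiff : barrier w g y - barrier w (g - dirDeriv u g) y ≤ 0 :=
    nonpos_of_mul_nonpos_left (hupper.trans (sub_nonpos.2 hanti)) ((inv_pos.2 hδ).trans_le hgap)
  have := le_of_mul_le_mul_right
    (hlower.trans (mul_le_mul_of_nonpos_left hgap hdiff)) (inv_pos.2 hδ)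
  linarith

theorem eval_zero_pos_of_forall_derivative_lt {q : ℝ[X]}
    (h : ∀ s : ℝ, 0 ≤ s → q.derivative.eval s < q.eval s) : 0 < q.eval 0 := by
  have hderiv (s : ℝ) : HasDerivAt (fun s => q.eval s / Real.exp s)
      ((q.derivative.eval s - q.eval s) / Real.exp s) s := by
    refine ((q.hasDerivAt s).div (Real.hasDerivAt_exp s) (Real.exp_pos s).ne').congr_deriv ?_
    field_simp
  have hanti : StrictAntiOn (fun s => q.eval s / Real.exp s) (Set.Ici 0) := by
    refine strictAntiOn_of_deriv_neg (convex_Ici 0)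
      (fun s _ => (hderiv s).continuousAt.continuousWithinAt) fun s hs => ?_
    rw [(hderiv s).deriv]
    exact div_neg_of_neg_of_pos (sub_neg.2 (h s (interior_subset hs))) (Real.exp_pos s)
  have hone : 0 ≤ q.eval 1 / Real.exp 1 :=
    le_of_tendsto (Polynomial.tendsto_div_exp_atTop q) <| (eventually_ge_atTop 1).mono fun s hs =>
      hanti.antitoneOn (Set.mem_Ici.2 zero_le_one) (Set.mem_Ici.2 (zero_le_one.trans hs)) hs
  simpa using hone.trans_lt (hanti Set.self_mem_Ici (Set.mem_Ici.2 zero_le_one) one_pos)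

theorem IsAboveRoots.of_sub_dirDeriv (hz : IsAboveRoots (g - dirDeriv u g) z) (hu : 0 ≤ u) :
    IsAboveRoots g z := fun y hy => by
  have := eval_zero_pos_of_forall_derivative_lt (q := restrictLine g y u) fun s hs => by
    simpa [derivative_restrictLine, eval_restrictLine_self] using
      ((hz.mono hy).add_smul hu hs).eval_pos
  simpa [eval_restrictLine_self] using this

theorem IsStable.exists_isAboveRoots_sub_dirDeriv {ι : Type*} [Fintype ι] {t : ι → ℝ}
    {U : ι → σ → ℝ} (hg : IsStable g) (ht : ∀ j, 0 ≤ t j) (htsum : ∑ j, t j = 1)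
    (hU : ∀ j, 0 ≤ U j) (hz : IsAboveRoots (g - dirDeriv (∑ j, t j • U j) g) z) :
    ∃ j, IsAboveRoots (g - dirDeriv (U j) g) z := by
  have hgz : IsAboveRoots g z :=
    hz.of_sub_dirDeriv (Finset.sum_nonneg fun j _ => smul_nonneg (ht j) (hU j))
  by_contra! hnot
  have hbarrier (j : ι) : MvPolynomial.eval z g ≤ MvPolynomial.eval z (dirDeriv (U j) g) := by
    by_contra! hlt
    exact hnot j (hgz.sub_dirDeriv hg (hU j) ((div_lt_one hgz.eval_pos).2 hlt))
  have hmean : MvPolynomial.eval z g ≤ MvPolynomial.eval z (dirDeriv (∑ j, t j • U j) g) :=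
    calc MvPolynomial.eval z g = ∑ j, t j * MvPolynomial.eval z g := by
          rw [← Finset.sum_mul, htsum, one_mul]
      _ ≤ ∑ j, t j * MvPolynomial.eval z (dirDeriv (U j) g) :=
          Finset.sum_le_sum fun j _ => mul_le_mul_of_nonneg_left (hbarrier j) (ht j)
      _ = _ := by rw [dirDeriv_sum]; simp [MvPolynomial.smul_eval]
  have := hz.eval_pos
  rw [map_sub] at this
  linarith

end Stability

section IteratedOperators

/-- The operators `1 - dirDeriv u` commute, so a multiset of them can be composed. -/
instance {σ R : Type*} [CommRing R] :
    LeftCommutative fun (u : σ → R) (g : MvPolynomial σ R) => g - dirDeriv u g where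
  left_comm u v g := by simp only [map_sub, dirDeriv_comm u v]; abel

/-- The polynomial `∏_{u ∈ us} (1 - D_u) g`, where `D_u` is the derivative in direction `u`. -/
noncomputable def iterSubDirDeriv {σ R : Type*} [CommRing R] (us : Multiset (σ → R))
    (g : MvPolynomial σ R) : MvPolynomial σ R :=
  us.foldr (fun u g => g - dirDeriv u g) g

section Algebra

variable {σ R : Type*} [CommRing R] {us : Multiset (σ → R)} {g p : MvPolynomial σ R} {u v : σ → R}

@[simp]
theorem iterSubDirDeriv_zero (g : MvPolynomial σ R) : iterSubDirDeriv 0 g = g :=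
  Multiset.foldr_zero _ _

theorem iterSubDirDeriv_cons (u : σ → R) (us : Multiset (σ → R)) (g : MvPolynomial σ R) :
    iterSubDirDeriv (u ::ₘ us) g = iterSubDirDeriv us g - dirDeriv u (iterSubDirDeriv us g) :=
  Multiset.foldr_cons _ _ _ _

theorem iterSubDirDeriv_cons' (u : σ → R) (us : Multiset (σ → R)) (g : MvPolynomial σ R) :
    iterSubDirDeriv (u ::ₘ us) g = iterSubDirDeriv us (g - dirDeriv u g) := by
  rw [← Multiset.singleton_add, add_comm, iterSubDirDeriv, Multiset.foldr_add,
    Multiset.foldr_singleton, iterSubDirDeriv]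

theorem eval_sub_derivative_of_derivative_derivative_eq_zero [IsDomain R] [CharZero R] {q : R[X]}
    (h : derivative (derivative q) = 0) (s : R) :
    q.eval s - q.derivative.eval s = q.eval (s - 1) := by
  have hdeg : q.natDegree ≤ 1 := by
    have := derivative_eq_zero.1 h
    rw [natDegree_derivative] at this
    lia
  rw [eq_X_add_C_of_natDegree_le_one hdeg]
  simp only [eval_add, eval_mul, eval_C, eval_X, derivative_add, derivative_mul, derivative_C,
    zero_mul, derivative_X, mul_one, zero_add, add_zero]
  ring

theorem eval_sub_dirDeriv_of_dirDeriv_dirDeriv_eq_zero [IsDomain R] [CharZero R]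
    (h : dirDeriv v (dirDeriv v p) = 0) (z : σ → R) :
    MvPolynomial.eval z (p - dirDeriv v p) = MvPolynomial.eval (z - v) p := by
  have hline : derivative (derivative (restrictLine p z v)) = 0 := by
    rw [derivative_restrictLine, derivative_restrictLine, h]
    exact map_zero _
  simpa [derivative_restrictLine, eval_restrictLine_self, sub_eq_add_neg] using
    eval_sub_derivative_of_derivative_derivative_eq_zero hline 0

theorem eval_iterSubDirDeriv [IsDomain R] [CharZero R]
    (h : ∀ u ∈ us, dirDeriv u (dirDeriv u p) = 0) (z : σ → R) :
    MvPolynomial.eval z (iterSubDirDeriv us p) = MvPolynomial.eval (z - us.sum) p := by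
  induction us using Multiset.induction generalizing p with
  | empty => simp
  | cons v us ih =>
    have hstep : ∀ u ∈ us, dirDeriv u (dirDeriv u (p - dirDeriv v p)) = 0 := fun u hu => by
      simp only [map_sub, dirDeriv_comm u v, h u (Multiset.mem_cons_of_mem hu), map_zero, sub_zero]
    rw [iterSubDirDeriv_cons', ih hstep, eval_sub_dirDeriv_of_dirDeriv_dirDeriv_eq_zero
      (h v (Multiset.mem_cons_self v us)), Multiset.sum_cons, sub_sub, add_comm]

end Algebra

variable {σ ι κ : Type*} {g : MvPolynomial σ ℝ} {us : Multiset (σ → ℝ)} {z : σ → ℝ}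

theorem isStable_iterSubDirDeriv (hg : IsStable g) (hus : ∀ u ∈ us, 0 ≤ u) :
    IsStable (iterSubDirDeriv us g) := by
  induction us using Multiset.induction with
  | empty => simpa using hg
  | cons u us ih =>
    rw [iterSubDirDeriv_cons]
    exact (ih fun v hv => hus v (Multiset.mem_cons_of_mem hv)).sub_dirDeriv
      (hus u (Multiset.mem_cons_self u us))

theorem IsStable.isAboveRoots_iterSubDirDeriv (hg : IsStable g) (hz : IsAboveRoots g z) {δ : ℝ}
    (hδ : 0 < δ) (hus : ∀ u ∈ us, 0 ≤ u) (h : ∀ u ∈ us, barrier u g z ≤ 1 - δ⁻¹) :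
    IsAboveRoots (iterSubDirDeriv us g) (z + δ • us.sum) ∧ ∀ w : σ → ℝ, 0 ≤ w →
      barrier w (iterSubDirDeriv us g) (z + δ • us.sum) ≤ barrier w g z := by
  induction us using Multiset.induction with
  | empty => simpa using hz
  | cons u us ih =>
    have hu : 0 ≤ u := hus u (Multiset.mem_cons_self u us)
    have hus' : ∀ v ∈ us, 0 ≤ v := fun v hv => hus v (Multiset.mem_cons_of_mem hv)
    obtain ⟨habove, hbarrier⟩ := ih hus' fun v hv => h v (Multiset.mem_cons_of_mem hv)
    have hu1 := (hbarrier u hu).trans (h u (Multiset.mem_cons_self u us))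
    have hstable := isStable_iterSubDirDeriv hg hus'
    rw [iterSubDirDeriv_cons, Multiset.sum_cons, add_comm u, smul_add, ← add_assoc]
    refine ⟨(habove.sub_dirDeriv hstable hu ?_).add_smul hu hδ.le, fun w hw =>
      (hstable.barrier_sub_dirDeriv_add_smul_le hu habove hδ hu1 hw).trans (hbarrier w hw)⟩
    linarith [inv_pos.2 hδ]

variable [Fintype ι] {t : ι → ℝ} {U : κ → ι → σ → ℝ}

theorem IsStable.exists_isAboveRoots_iterSubDirDeriv (hg : IsStable g) (ht : ∀ j, 0 ≤ t j)
    (htsum : ∑ j, t j = 1) (hU : ∀ i j, 0 ≤ U i j) (s : Finset κ)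
    (hz : IsAboveRoots (iterSubDirDeriv (s.val.map fun i => ∑ j, t j • U i j) g) z) :
    ∃ f : κ → ι, IsAboveRoots (iterSubDirDeriv (s.val.map fun i => U i (f i)) g) z := by
  classical
  have hmean (i : κ) : 0 ≤ ∑ j, t j • U i j :=
    Finset.sum_nonneg fun j _ => smul_nonneg (ht j) (hU i j)
  induction s using Finset.induction_on generalizing g with
  | empty =>
    have : Nonempty ι := not_isEmpty_iff.1 fun _ => by simp at htsum
    exact ⟨fun _ => Classical.arbitrary ι, hz⟩
  | insert i s his ih =>
    rw [Finset.insert_val_of_notMem his, Multiset.map_cons, iterSubDirDeriv_cons] at hz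
    have hstable := isStable_iterSubDirDeriv (us := s.val.map fun i => ∑ j, t j • U i j) hg
      (by simp [hmean])
    obtain ⟨j, hj⟩ := hstable.exists_isAboveRoots_sub_dirDeriv ht htsum (hU i) hz
    rw [← iterSubDirDeriv_cons, iterSubDirDeriv_cons'] at hj
    obtain ⟨f, hf⟩ := ih (hg.sub_dirDeriv (hU i j)) hj
    refine ⟨Function.update f i j, ?_⟩
    have hcongr : (s.val.map fun k => U k (Function.update f i j k)) =
        s.val.map fun k => U k (f k) :=
      Multiset.map_congr rfl fun k hk => by
        rw [Function.update_of_ne (ne_of_mem_of_not_mem hk his)]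
    rwa [Finset.insert_val_of_notMem his, Multiset.map_cons, Function.update_self, hcongr,
      iterSubDirDeriv_cons']

theorem IsStable.exists_forall_eval_sub_sum_pos [Fintype κ] (hg : IsStable g)
    (hz : IsAboveRoots g z) (ht : ∀ j, 0 ≤ t j) (htsum : ∑ j, t j = 1) (hU : ∀ i j, 0 ≤ U i j)
    (haffine : ∀ i j, dirDeriv (U i j) (dirDeriv (U i j) g) = 0) {δ : ℝ} (hδ : 0 < δ)
    (hbarrier : ∀ i, barrier (∑ j, t j • U i j) g z ≤ 1 - δ⁻¹) :
    ∃ f : κ → ι, ∀ y, z + δ • ∑ i, ∑ j, t j • U i j ≤ y →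
      0 < MvPolynomial.eval (y - ∑ i, U i (f i)) g := by
  have hmean (i : κ) : 0 ≤ ∑ j, t j • U i j :=
    Finset.sum_nonneg fun j _ => smul_nonneg (ht j) (hU i j)
  obtain ⟨f, hf⟩ := hg.exists_isAboveRoots_iterSubDirDeriv ht htsum hU Finset.univ
    (hg.isAboveRoots_iterSubDirDeriv hz hδ (by simp [hmean]) (by simp [hbarrier])).1
  refine ⟨f, fun y hy => ?_⟩
  have := hf y hy
  rwa [eval_iterSubDirDeriv (by simp [haffine])] at this

end IteratedOperators

section Pencil

variable {n : Type*} [Fintype n] [DecidableEq n] {P : Matrix n n ℂ}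

/-- The matrix `(1 - P) + diag(w) P`. Its determinant, as a polynomial in `w`, is real stable when
`P` is an orthogonal projection. -/
def pencil (P : Matrix n n ℂ) (w : n → ℂ) : Matrix n n ℂ :=
  1 - P + diagonal w * P

theorem pencil_eq_one_add (P : Matrix n n ℂ) (w : n → ℂ) :
    pencil P w = 1 + (diagonal w - 1) * P := by
  rw [pencil, sub_mul, one_mul]
  abel

theorem det_pencil_star (hP : P.IsHermitian) (w : n → ℂ) :
    (pencil P (star w)).det = star (pencil P w).det := by
  rw [← det_conjTranspose, pencil_eq_one_add, pencil_eq_one_add, conjTranspose_add,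
    conjTranspose_mul, conjTranspose_one, conjTranspose_sub, diagonal_conjTranspose,
    conjTranspose_one, hP, det_one_add_mul_comm]

theorem exists_map_algebraMap_eq_of_eval_star {σ : Type*} {p : MvPolynomial σ ℂ}
    (h : ∀ w, MvPolynomial.eval (star w) p = star (MvPolynomial.eval w p)) :
    ∃ q : MvPolynomial σ ℝ, MvPolynomial.map (algebraMap ℝ ℂ) q = p := by
  have hconj : MvPolynomial.map (starRingEnd ℂ) p = p := MvPolynomial.funext fun w => by
    have := MvPolynomial.map_eval (starRingEnd ℂ) (star w) p
    rw [h] at this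
    simpa [Function.comp_def] using this.symm
  refine MvPolynomial.mem_range_map_iff_coeffs_subset.2 fun c hc => ?_
  obtain ⟨d, _, rfl⟩ := MvPolynomial.mem_coeffs_iff.1 hc
  have := congrArg (MvPolynomial.coeff d) hconj
  rw [MvPolynomial.coeff_map] at this
  exact ⟨_, Complex.conj_eq_iff_re.1 this⟩

theorem exists_aeval_eq_det_pencil (hP : P.IsHermitian) :
    ∃ q : MvPolynomial n ℝ, ∀ w : n → ℂ, MvPolynomial.aeval w q = (pencil P w).det := by
  set p : MvPolynomial n ℂ := (1 - P.map MvPolynomial.C +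
    diagonal MvPolynomial.X * P.map MvPolynomial.C).det with hp
  have heval (w : n → ℂ) : MvPolynomial.eval w p = (pencil P w).det := by
    rw [hp, RingHom.map_det]
    congr 1
    ext a b
    simp [pencil, one_apply, diagonal_mul, apply_ite]
  obtain ⟨q, hq⟩ := exists_map_algebraMap_eq_of_eval_star (p := p) fun w => by
    rw [heval, heval, det_pencil_star hP]
  refine ⟨q, fun w => ?_⟩
  rw [← heval, ← hq, MvPolynomial.eval_map, MvPolynomial.aeval_def]

theorem star_dotProduct_diagonal_mulVec_eq_zero (hP : P.IsHermitian) (hP2 : P * P = P)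
    {w v : n → ℂ} (h : pencil P w *ᵥ v = 0) :
    star (P *ᵥ v) ⬝ᵥ diagonal w *ᵥ (P *ᵥ v) = 0 := by
  have hPM : P * pencil P w = P * diagonal w * P := by
    rw [pencil, mul_add, mul_sub, mul_one, hP2, sub_self, zero_add, mul_assoc]
  rw [star_mulVec, hP, ← dotProduct_mulVec, mulVec_mulVec, mulVec_mulVec, ← hPM,
    ← mulVec_mulVec, h, mulVec_zero, dotProduct_zero]

theorem eq_zero_of_star_dotProduct_diagonal_mulVec_eq_zero {w y : n → ℂ} {c : ℂ}
    (hc : ∀ i, 0 < (c * w i).im) (h : star y ⬝ᵥ diagonal w *ᵥ y = 0) : y = 0 := by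
  have hsum : ∑ i, Complex.normSq (y i) * (c * w i).im = 0 := by
    have := congrArg (fun x => (c * x).im) h
    simp only [dotProduct, mulVec_diagonal, Finset.mul_sum, Complex.im_sum, mul_zero,
      Complex.zero_im] at this
    rw [← this]
    refine Finset.sum_congr rfl fun i _ => ?_
    rw [← Complex.im_ofReal_mul, ← Complex.mul_conj, Pi.star_apply, RCLike.star_def]
    ring_nf
  rw [Finset.sum_eq_zero_iff_of_nonneg fun i _ =>
    mul_nonneg (Complex.normSq_nonneg _) (hc i).le] at hsum
  funext i
  exact Complex.normSq_eq_zero.1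
    ((mul_eq_zero.1 (hsum i (Finset.mem_univ i))).resolve_right (hc i).ne')

theorem det_pencil_ne_zero (hP : P.IsHermitian) (hP2 : P * P = P) {w : n → ℂ} {c : ℂ}
    (hc : ∀ i, 0 < (c * w i).im) : (pencil P w).det ≠ 0 := fun h0 => by
  obtain ⟨v, hv, hMv⟩ := exists_mulVec_eq_zero_iff.2 h0
  have hPv : P *ᵥ v = 0 := eq_zero_of_star_dotProduct_diagonal_mulVec_eq_zero hc
    (star_dotProduct_diagonal_mulVec_eq_zero hP hP2 hMv)
  exact hv (by simpa [pencil, add_mulVec, sub_mulVec, ← mulVec_mulVec, hPv] using hMv)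

open scoped ComplexOrder in
theorem det_pencil_pos (hP : P.IsHermitian) (hP2 : P * P = P) {z : n → ℝ} (hz : ∀ i, 0 < z i) :
    0 < (pencil P fun i => z i).det := by
  set Z : Matrix n n ℂ := diagonal fun i => (z i : ℂ)
  have hsub : (1 - P).PosSemidef := by
    have : (1 - P)ᴴ * (1 - P) = 1 - P := by
      rw [conjTranspose_sub, conjTranspose_one, hP, mul_sub, mul_one, sub_mul, one_mul, hP2]
      abel
    exact this ▸ posSemidef_conjTranspose_mul_self (1 - P)
  have hconj : (P * Z * P).PosSemidef := by
    have hZ : Z.PosSemidef := .diagonal fun i => by simpa using (hz i).le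
    simpa only [hP.eq] using hZ.mul_mul_conjTranspose_same P
  have hdet : (pencil P fun i => z i).det = (1 - P + P * Z * P).det := by
    have hexpand : P * ((Z - 1) * P) = P * Z * P - P := by
      rw [sub_mul, one_mul, mul_sub, hP2, mul_assoc]
    calc (pencil P fun i => z i).det = (1 + (Z - 1) * P * P).det := by
          rw [pencil_eq_one_add, mul_assoc, hP2]
      _ = (1 - P + P * Z * P).det := by
          rw [det_one_add_mul_comm, hexpand]
          abel_nf
  refine lt_of_le_of_ne (hdet ▸ (hsub.add hconj).det_nonneg)
    (det_pencil_ne_zero hP hP2 (c := Complex.I) fun i => ?_).symm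
  simpa using hz i

theorem det_pencil_add_single (P : Matrix n n ℂ) (w : n → ℂ) (i : n) (s : ℂ) :
    (pencil P (w + Pi.single i s)).det =
      (pencil P w).det + s * ((pencil P w).updateRow i (P i)).det := by
  have hrow : pencil P (w + Pi.single i s) =
      (pencil P w).updateRow i (pencil P w i + s • P i) := by
    ext a b
    obtain rfl | h := eq_or_ne a i
    · simp only [pencil, Matrix.add_apply, Matrix.sub_apply, diagonal_mul, Pi.add_apply,
        Pi.single_eq_same, updateRow_self, Pi.smul_apply, smul_eq_mul]
      ring
    · simp [pencil, diagonal_mul, h]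
  rw [hrow, det_updateRow_add, det_updateRow_smul, updateRow_eq_self]

theorem det_updateRow_pencil_const (hP2 : P * P = P) {τ : ℂ} (hτ : τ ≠ 0) (i : n) :
    ((pencil P fun _ => τ).updateRow i (P i)).det = P i i / τ * (pencil P fun _ => τ).det := by
  have hmul : τ • P = P * pencil P fun _ => τ := by
    rw [pencil, ← smul_one_eq_diagonal, mul_add, mul_sub, mul_one, hP2, sub_self, zero_add,
      smul_mul_assoc, one_mul, mul_smul_comm, hP2]
  have hrow : P i = ∑ k, (P i k / τ) • (pencil P fun _ => τ) k := by
    funext b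
    have := congrFun (congrFun hmul i) b
    rw [Matrix.smul_apply, mul_apply, smul_eq_mul] at this
    simp only [Finset.sum_apply, Pi.smul_apply, smul_eq_mul, div_mul_eq_mul_div]
    rw [← Finset.sum_div, ← this, mul_div_cancel_left₀ _ hτ]
  conv_lhs => rw [hrow]
  rw [det_updateRow_sum, smul_eq_mul]

end Pencil

section PencilPolynomial

theorem dirDeriv_of_eval_add_smul {σ : Type*} {p : MvPolynomial σ ℝ} {z v : σ → ℝ} {a b : ℝ}
    (h : ∀ s : ℝ, MvPolynomial.eval (z + s • v) p = a + s * b) :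
    MvPolynomial.eval z (dirDeriv v p) = b ∧
      MvPolynomial.eval z (dirDeriv v (dirDeriv v p)) = 0 := by
  have hline : restrictLine p z v = C a + X * C b :=
    Polynomial.funext fun s => by
      rw [eval_restrictLine_self, h, eval_add, eval_C, eval_mul, eval_X, eval_C]
  have hderiv : restrictLine (dirDeriv v p) z v = C b := by
    rw [← derivative_restrictLine, hline]; simp
  have hderiv2 : restrictLine (dirDeriv v (dirDeriv v p)) z v = 0 := by
    rw [← derivative_restrictLine, hderiv]; simp
  have heval := eval_restrictLine_self (dirDeriv v p) z v 0
  have heval2 := eval_restrictLine_self (dirDeriv v (dirDeriv v p)) z v 0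
  rw [hderiv, eval_C, zero_smul, add_zero] at heval
  rw [hderiv2, eval_zero, zero_smul, add_zero] at heval2
  exact ⟨heval.symm, heval2.symm⟩

variable {n : Type*} [Fintype n] [DecidableEq n] {P : Matrix n n ℂ} {q : MvPolynomial n ℝ}
  (hq : ∀ w : n → ℂ, MvPolynomial.aeval w q = (pencil P w).det)

include hq

theorem ofReal_eval_eq_det_pencil (z : n → ℝ) :
    ((MvPolynomial.eval z q : ℝ) : ℂ) = (pencil P fun i => z i).det := by
  rw [← hq, ← MvPolynomial.aeval_eq_eval]
  exact (MvPolynomial.aeval_algebraMap_apply ℂ z q).symm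

theorem isStable_of_eq_det_pencil (hP : P.IsHermitian) (hP2 : P * P = P) : IsStable q :=
  fun w hw => by
    rw [hq]
    exact det_pencil_ne_zero hP hP2 (c := 1) (by simpa using hw)

theorem eval_pos_of_eq_det_pencil (hP : P.IsHermitian) (hP2 : P * P = P) {z : n → ℝ}
    (hz : ∀ i, 0 < z i) : 0 < MvPolynomial.eval z q := by
  open scoped ComplexOrder in
  have := det_pencil_pos hP hP2 hz
  rw [← ofReal_eval_eq_det_pencil hq] at this
  exact_mod_cast this

theorem ofReal_eval_add_smul_single (z : n → ℝ) (i : n) (c s : ℝ) :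
    ((MvPolynomial.eval (z + s • Pi.single i c) q : ℝ) : ℂ) =
      (MvPolynomial.eval z q : ℝ) + s * (c * ((pencil P fun i => z i).updateRow i (P i)).det) := by
  have hcast : (fun k => (((z + s • Pi.single i c : n → ℝ) k : ℝ) : ℂ)) =
      (fun k => (z k : ℂ)) + Pi.single i ((s * c : ℝ) : ℂ) := by
    funext k
    obtain rfl | h := eq_or_ne k i
    · simp
    · simp [h]
  rw [ofReal_eval_eq_det_pencil hq, ofReal_eval_eq_det_pencil hq, hcast, det_pencil_add_single,
    Complex.ofReal_mul, mul_assoc]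

theorem dirDeriv_single_dirDeriv_single (i : n) (c : ℝ) :
    dirDeriv (Pi.single i c) (dirDeriv (Pi.single i c) q) = 0 :=
  MvPolynomial.funext fun z => by
    rw [map_zero]
    refine (dirDeriv_of_eval_add_smul (a := MvPolynomial.eval z q)
      (b := c * ((pencil P fun i => z i).updateRow i (P i)).det.re) fun s => ?_).2
    simpa using congrArg Complex.re (ofReal_eval_add_smul_single hq z i c s)

theorem barrier_single_const (hP : P.IsHermitian) (hP2 : P * P = P) {τ : ℝ} (hτ : 0 < τ) (i : n) :
    barrier (Pi.single i 1) q (fun _ => τ) = (P i i).re / τ := by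
  have hpos := eval_pos_of_eq_det_pencil hq hP hP2 fun _ => hτ
  rw [barrier, div_eq_iff hpos.ne']
  refine (dirDeriv_of_eval_add_smul (a := MvPolynomial.eval (fun _ => τ) q) fun s => ?_).1
  have := congrArg Complex.re (ofReal_eval_add_smul_single hq (fun _ => τ) i 1 s)
  rw [det_updateRow_pencil_const hP2 (by exact_mod_cast hτ.ne'),
    ← ofReal_eval_eq_det_pencil hq (fun _ => τ)] at this
  simpa [← Complex.ofReal_div] using this

end PencilPolynomial

section Coloring

variable {n κ : Type*} [Fintype n] [DecidableEq n] [Fintype κ] [DecidableEq κ] {P : Matrix n n ℂ}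

theorem pencil_blockDiagonal (P : Matrix n n ℂ) (w : n × κ → ℂ) :
    pencil (blockDiagonal fun _ : κ => P) w =
      blockDiagonal fun j => pencil P fun i => w (i, j) := by
  have hdiag : diagonal w = blockDiagonal fun j => diagonal fun i => w (i, j) :=
    (blockDiagonal_diagonal fun j i => w (i, j)).symm
  rw [pencil, hdiag, ← blockDiagonal_one, ← blockDiagonal_sub, ← blockDiagonal_mul,
    ← blockDiagonal_add]
  rfl

theorem sum_sum_single_one {ι κ R : Type*} [Fintype ι] [Fintype κ] [DecidableEq ι] [DecidableEq κ]
    [NonAssocSemiring R] : (∑ i, ∑ j, Pi.single (i, j) 1 : ι × κ → R) = 1 := by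
  rw [← Fintype.sum_prod_type' (f := fun i j => (Pi.single (i, j) 1 : ι × κ → R))]
  exact Finset.univ_sum_single 1

theorem sum_single_graph_apply {n κ M : Type*} [Fintype n] [DecidableEq n] [DecidableEq κ]
    [AddCommMonoid M] (f : n → κ) (c : κ → M) (i : n) (j : κ) :
    (∑ k, Pi.single (k, f k) (c (f k)) : n × κ → M) (i, j) = if f i = j then c j else 0 := by
  rw [Finset.sum_apply, Finset.sum_eq_single i (fun k _ hk => ?_) (by simp)]
  · obtain rfl | h := eq_or_ne (f i) j
    · simp
    · simp [h, Ne.symm h]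
  · simp [hk.symm]

theorem exists_forall_det_pencil_sub_ne_zero {A : Matrix (n × κ) (n × κ) ℂ} (hA : A.IsHermitian)
    (hA2 : A * A = A) {t : κ → ℝ} (ht : ∀ j, 0 < t j) (htsum : ∑ j, t j = 1) {α : ℝ} (hα : 0 < α)
    (hdiag : ∀ i, ∑ j, (A (i, j) (i, j)).re ≤ α) :
    ∃ f : n → κ, ∀ x, (1 + √α) ^ 2 ≤ x →
      (pencil A fun k => ((x - if f k.1 = k.2 then (t k.2)⁻¹ else 0 : ℝ) : ℂ)).det ≠ 0 := by
  obtain ⟨q, hq⟩ := exists_aeval_eq_det_pencil hA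
  have hs : 0 < √α := Real.sqrt_pos.2 hα
  set τ := √α + √α ^ 2 with hτ
  have hτpos : 0 < τ := add_pos hs (pow_pos hs 2)
  set U : n → κ → n × κ → ℝ := fun i j => Pi.single (i, j) (t j)⁻¹
  have htU (i : n) (j : κ) : t j • U i j = Pi.single (i, j) 1 := by
    rw [← Pi.single_smul, smul_eq_mul, mul_inv_cancel₀ (ht j).ne']
  have hbarrier (i : n) : barrier (∑ j, t j • U i j) q (fun _ => τ) ≤ 1 - (1 + √α)⁻¹ := by
    simp only [htU, barrier_sum, barrier_single_const hq hA hA2 hτpos]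
    rw [← Finset.sum_div, div_le_iff₀ hτpos]
    calc ∑ j, (A (i, j) (i, j)).re ≤ √α ^ 2 := (hdiag i).trans_eq (Real.sq_sqrt hα.le).symm
      _ = (1 - (1 + √α)⁻¹) * τ := by rw [hτ]; field_simp; ring
  obtain ⟨f, hf⟩ := (isStable_of_eq_det_pencil hq hA hA2).exists_forall_eval_sub_sum_pos
    (U := U) (fun y hy => eval_pos_of_eq_det_pencil hq hA hA2 fun k => hτpos.trans_le (hy k))
    (fun j => (ht j).le) htsum (fun i j => Pi.single_nonneg.2 (inv_nonneg.2 (ht j).le))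
    (fun i j => dirDeriv_single_dirDeriv_single hq (i, j) (t j)⁻¹) (by positivity) hbarrier
  refine ⟨f, fun x hx hdet => (hf (fun _ => x) ?_).ne' ?_⟩
  · simp only [htU, sum_sum_single_one]
    refine fun _ => ?_
    calc τ + (1 + √α) * 1 = (1 + √α) ^ 2 := by rw [hτ]; ring
      _ ≤ x := hx
  · refine Complex.ofReal_eq_zero.1 ((ofReal_eval_eq_det_pencil hq _).trans ?_)
    simpa only [Pi.sub_apply, U, sum_single_graph_apply f fun j => (t j)⁻¹] using hdet

theorem exists_forall_det_pencil_ne_zero (hP : P.IsHermitian) (hP2 : P * P = P) {t : κ → ℝ}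
    (ht : ∀ j, 0 < t j) (htsum : ∑ j, t j = 1) {α : ℝ} (hα : 0 < α)
    (hdiag : ∀ i, Fintype.card κ * (P i i).re ≤ α) :
    ∃ f : n → κ, ∀ x, (1 + √α) ^ 2 ≤ x → ∀ j,
      (pencil P fun i => ((x - if f i = j then (t j)⁻¹ else 0 : ℝ) : ℂ)).det ≠ 0 := by
  obtain ⟨f, hf⟩ := exists_forall_det_pencil_sub_ne_zero (A := blockDiagonal fun _ : κ => P)
    (by rw [IsHermitian, blockDiagonal_conjTranspose, hP]) (by rw [← blockDiagonal_mul, hP2])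
    ht htsum hα fun i => by simpa [blockDiagonal_apply_eq] using hdiag i
  refine ⟨f, fun x hx j => ?_⟩
  have hprod := hf x hx
  rw [pencil_blockDiagonal, det_blockDiagonal] at hprod
  exact Finset.prod_ne_zero_iff.1 hprod j (Finset.mem_univ j)

end Coloring

section Norm

variable {m : ℕ} {P : Matrix (Fin m) (Fin m) ℂ}

open scoped Matrix.Norms.L2Operator MatrixOrder ComplexOrder in
theorem exists_mulVec_eq_opNorm_smul {A : Matrix (Fin m) (Fin m) ℂ} (hA : A.PosSemidef)
    (hA0 : A ≠ 0) : ∃ v, v ≠ 0 ∧ A *ᵥ v = (opNorm A : ℂ) • v := by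
  have hnorm : opNorm A = ‖A‖ := (cstar_norm_def _).symm
  have : Nontrivial (Matrix (Fin m) (Fin m) ℂ) := ⟨⟨_, _, hA0⟩⟩
  have hspec := CStarAlgebra.norm_mem_spectrum_of_nonneg hA.nonneg
  rw [spectrum.mem_iff, isUnit_iff_isUnit_det, isUnit_iff_ne_zero, not_not, ← hnorm] at hspec
  obtain ⟨v, hv, hAv⟩ := exists_mulVec_eq_zero_iff.2 hspec
  refine ⟨v, hv, ?_⟩
  rw [sub_mulVec, sub_eq_zero, Algebra.algebraMap_eq_smul_one, smul_mulVec, one_mulVec] at hAv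
  exact hAv.symm

theorem opNorm_zero : opNorm (0 : Matrix (Fin m) (Fin m) ℂ) = 0 := by
  rw [opNorm, map_zero, norm_zero]

open scoped ComplexOrder in
theorem posSemidef_mul_diagProj_mul (hP : P.IsHermitian) (S : Finset (Fin m)) :
    (P * diagProj S * P).PosSemidef := by
  have hS : (diagProj S).PosSemidef := .diagonal fun i => by
    dsimp only; split_ifs <;> simp
  simpa only [hP.eq] using hS.mul_mul_conjTranspose_same P

theorem det_pencil_eq_zero_of_mulVec_eq_smul (hP2 : P * P = P) {S : Finset (Fin m)} {t l : ℝ}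
    (hl : l ≠ 0) {v : Fin m → ℂ} (hv : v ≠ 0)
    (h : (P * diagProj S * P) *ᵥ v = (l : ℂ) • v) :
    (pencil P fun i => ((l / t - if i ∈ S then t⁻¹ else 0 : ℝ) : ℂ)).det = 0 := by
  have hPv : P *ᵥ v = v := by
    refine smul_right_injective _ (Complex.ofReal_ne_zero.2 hl) (?_ : (l : ℂ) • _ = (l : ℂ) • _)
    rw [← mulVec_smul, ← h, mulVec_mulVec, ← mul_assoc, ← mul_assoc, hP2]
  have hPSv : P *ᵥ diagProj S *ᵥ v = (l : ℂ) • v := by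
    rw [← h, ← mulVec_mulVec, ← mulVec_mulVec, hPv]
  have hdiag : diagonal (fun i => ((l / t - if i ∈ S then t⁻¹ else 0 : ℝ) : ℂ)) =
      (t⁻¹ : ℂ) • ((l : ℂ) • 1 - diagProj S) := by
    ext a b
    obtain rfl | hab := eq_or_ne a b
    · by_cases ha : a ∈ S <;> simp [diagProj, ha, mul_sub, div_eq_inv_mul]
    · simp [diagProj, hab]
  rw [pencil_eq_one_add, ← hP2, ← mul_assoc, det_one_add_mul_comm,
    ← exists_mulVec_eq_zero_iff]
  refine ⟨v, hv, ?_⟩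
  rw [hdiag, add_mulVec, one_mulVec, ← mulVec_mulVec, ← mulVec_mulVec, hPv, sub_mulVec, one_mulVec,
    smul_mulVec, sub_mulVec, smul_mulVec, one_mulVec, mulVec_sub, mulVec_smul, mulVec_sub,
    mulVec_smul, hPSv, hPv, sub_self, smul_zero, zero_sub, add_neg_cancel]

theorem opNorm_mul_diagProj_mul_le (hP : P.IsHermitian) (hP2 : P * P = P) {S : Finset (Fin m)}
    {t B : ℝ} (ht : 0 < t) (hB : 0 ≤ B)
    (h : ∀ x, B ≤ x → (pencil P fun i => ((x - if i ∈ S then t⁻¹ else 0 : ℝ) : ℂ)).det ≠ 0) :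
    opNorm (P * diagProj S * P) ≤ t * B := by
  by_contra! hlt
  have hpos := (mul_nonneg ht.le hB).trans_lt hlt
  obtain ⟨v, hv, hev⟩ := exists_mulVec_eq_opNorm_smul (posSemidef_mul_diagProj_mul hP S)
    fun h0 => by rw [h0, opNorm_zero] at hpos; exact hpos.false
  exact h _ ((le_div_iff₀' ht).2 hlt.le)
    (det_pencil_eq_zero_of_mulVec_eq_smul hP2 hpos.ne' hv hev)

theorem sum_diagProj_filter_eq {r : ℕ} (f : Fin m → Fin r) :
    ∑ j, diagProj {i | f i = j} = 1 := by
  ext a b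
  obtain rfl | h := eq_or_ne a b
  · simp [diagProj, Matrix.sum_apply]
  · simp [diagProj, Matrix.sum_apply, h]

end Norm

open scoped ComplexOrder in
theorem eq_zero_of_forall_diag_re_nonpos {n : Type*} [Fintype n] {P : Matrix n n ℂ}
    (hP : P.IsHermitian) (hP2 : P * P = P) (h : ∀ i, (P i i).re ≤ 0) : P = 0 := by
  have hself : Pᴴ * P = P := by rw [hP, hP2]
  have hpos : P.PosSemidef := hself ▸ posSemidef_conjTranspose_mul_self P
  refine hpos.trace_eq_zero_iff.1 (Finset.sum_eq_zero fun i _ => ?_)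
  have := Complex.nonneg_iff.1 (hpos.diag_nonneg (i := i))
  exact Complex.ext (le_antisymm (h i) this.1) this.2.symm

/-- If `P ∈ M_m(ℂ)` is a projection matrix (`P = P* = P²`) whose diagonal entries are
each at most `ε`, and `t₁, …, t_r > 0` sum to `1`, then there are `r` diagonal projections
`Q₁, …, Q_r` with `∑ⱼ Qⱼ = I` and `‖PQⱼP‖ ≤ tⱼ (1 + √(rε))²` for each `j`. -/
theorem stmt9 {m : ℕ} (ε : ℝ) (P : Matrix (Fin m) (Fin m) ℂ)
    (hP1 : Pᴴ = P) (hP2 : P * P = P)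
    (hdiag : ∀ i, (P i i).re ≤ ε)
    (r : ℕ) (t : Fin r → ℝ) (ht : ∀ j, 0 < t j) (htsum : ∑ j, t j = 1) :
    ∃ S : Fin r → Finset (Fin m),
      (∑ j, diagProj (S j) = 1) ∧
      ∀ j, opNorm (P * diagProj (S j) * P) ≤ t j * (1 + Real.sqrt (r * ε)) ^ 2 := by
  obtain ⟨j₀, -⟩ : (Finset.univ : Finset (Fin r)).Nonempty :=
    Finset.nonempty_of_sum_ne_zero (htsum ▸ one_ne_zero)
  suffices ∃ f : Fin m → Fin r, ∀ j,
      opNorm (P * diagProj {i | f i = j} * P) ≤ t j * (1 + √(r * ε)) ^ 2 by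
    obtain ⟨f, hf⟩ := this
    exact ⟨fun j => {i | f i = j}, sum_diagProj_filter_eq f, hf⟩
  obtain hε | hε := le_or_gt ε 0
  · have hP0 : P = 0 := eq_zero_of_forall_diag_re_nonpos hP1 hP2 fun i => (hdiag i).trans hε
    refine ⟨fun _ => j₀, fun j => ?_⟩
    rw [hP0, mul_zero, opNorm_zero]
    exact mul_nonneg (ht j).le (sq_nonneg _)
  · have hα : 0 < r * ε := mul_pos (Nat.cast_pos.2 j₀.pos) hε
    obtain ⟨f, hf⟩ := exists_forall_det_pencil_ne_zero hP1 hP2 ht htsum hα fun i => by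
      rw [Fintype.card_fin]
      exact mul_le_mul_of_nonneg_left (hdiag i) r.cast_nonneg
    exact ⟨f, fun j => opNorm_mul_diagProj_mul_le hP1 hP2 (ht j) (sq_nonneg _) fun x hx => by
      simpa only [Finset.mem_filter_univ] using hf x hx j⟩
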